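/- arXiv:1504.08259 — 2 statements merged into one kernel-verified Lean document; each statement's English description precedes it below -/
import Mathlib

section
/- Let M be an NFA over an alphabet Σ with state set Q in which every state is accepting, and let u₁, …, u_k (k ≥ 1) be words over Σ such that the nested reachability set R(u_k, R(u_{k−1}, …, R(u₁, Q)…)) is empty. Then for every natural number ℓ and all words s₁, …, s_{k+1} over Σ, every word w' accepted by M satisfies ed(s₁u₁^ℓ s₂u₂^ℓ⋯s_k u_k^ℓ s_{k+1}, w') ≥ ℓ; equivalently, ed({s₁u₁^ℓ⋯s_k u_k^ℓ s_{k+1}}, M.accepts) ≥ ℓ. -/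
/-- A cost structure for Levenshtein edit distance (as in the older Mathlib). -/
structure Levenshtein.Cost (α β δ : Type*) where
  /-- Cost to delete an element from a list. -/
  delete : α → δ
  /-- Cost to insert an element into a list. -/
  insert : β → δ
  /-- Cost to substitute one element for another in a list. -/
  substitute : α → β → δ

/-- The default cost structure, for which all operations cost `1` (as in the older Mathlib). -/
def Levenshtein.defaultCost {α : Type*} [DecidableEq α] : Levenshtein.Cost α α ℕ where
  delete _ := 1
  insert _ := 1
  substitute a b := if a = b then 0 else 1

/-- (Implementation detail for `levenshtein`, as in the older Mathlib.) Given the distances from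
each suffix of `xs` to `ys`, compute the distances from each suffix of `xs` to `y :: ys`. -/
def Levenshtein.impl {α β δ : Type*} [AddZeroClass δ] [Min δ] (C : Levenshtein.Cost α β δ)
    (xs : List α) (y : β) (d : {r : List δ // 0 < r.length}) : {r : List δ // 0 < r.length} :=
  let ⟨ds, w⟩ := d
  xs.zip (ds.zip ds.tail) |>.foldr
    (init := ⟨[C.insert y + ds.getLast (List.length_pos_iff.mp w)], by simp⟩)
    (fun ⟨x, d₀, d₁⟩ ⟨r, w⟩ =>
      ⟨min (C.delete x + r[0]) (min (C.insert y + d₀) (C.substitute x y + d₁)) :: r, by simp⟩)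

/-- `suffixLevenshtein C xs ys` computes the Levenshtein distance (using the cost functions
provided by `C`) from each suffix of the list `xs` to the list `ys` (as in the older Mathlib). -/
def suffixLevenshtein {α β δ : Type*} [AddZeroClass δ] [Min δ] (C : Levenshtein.Cost α β δ)
    (xs : List α) (ys : List β) : {r : List δ // 0 < r.length} :=
  ys.foldr
    (Levenshtein.impl C xs)
    (xs.foldr (init := ⟨[0], by simp⟩) (fun a ⟨r, w⟩ => ⟨(C.delete a + r[0]) :: r, by simp⟩))

/-- `levenshtein C xs ys` computes the Levenshtein distance (using the cost functions provided
by `C`) from the list `xs` to the list `ys` (as in the older Mathlib). -/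
def levenshtein {α β δ : Type*} [AddZeroClass δ] [Min δ] (C : Levenshtein.Cost α β δ)
    (xs : List α) (ys : List β) : δ :=
  let ⟨r, w⟩ := suffixLevenshtein C xs ys
  r[0]

/-- Levenshtein edit distance between two words. -/
def ed {α : Type*} [DecidableEq α] (w₁ w₂ : List α) : ℕ :=
  levenshtein Levenshtein.defaultCost w₁ w₂

/-- Edit distance from a word to a language, valued in `ℕ∞`. -/
noncomputable def edWordLang {α : Type*} [DecidableEq α] (w : List α) (L : Language α) : ℕ∞ :=
  ⨅ w' ∈ L, (ed w w' : ℕ∞)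

/-- Edit distance from language `L₁` to language `L₂`, valued in `ℕ∞`. -/
noncomputable def edLang {α : Type*} [DecidableEq α] (L₁ L₂ : Language α) : ℕ∞ :=
  ⨆ w ∈ L₁, edWordLang w L₂

/-- `u ^ ℓ` : concatenation of `ℓ` copies of `u`. -/
def wpow {α : Type*} (u : List α) (ℓ : ℕ) : List α := (List.replicate ℓ u).flatten

/-- The interleaved concatenation `s₁u₁s₂u₂⋯s_k u_k s_{k+1}` where
`ss = [s₁, …, s_{k+1}]` and `us = [u₁, …, u_k]`. -/
def weave {α : Type*} (ss us : List (List α)) : List α :=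
  (List.zipWith (· ++ ·) ss us).flatten ++ (ss.drop us.length).flatten

/-- A context-free grammar is in Chomsky normal form. -/
def ContextFreeGrammar.IsCNF {α : Type*} (G : ContextFreeGrammar α) : Prop :=
  ∀ r ∈ G.rules,
    (∃ z u : G.NT, r.output = [Symbol.nonterminal z, Symbol.nonterminal u]) ∨
    (∃ a : α, r.output = [Symbol.terminal a]) ∨
    (r.input = G.initial ∧ r.output = [])

/-- Compact `G`-decomposition of the word `w`. -/
def IsCompactDecomp {α : Type*} (G : ContextFreeGrammar α) [Fintype G.NT]
    (w : List α) (ss us : List (List α)) : Prop :=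
  ss.length = us.length + 1 ∧ w = weave ss us ∧
  (∀ ℓ : ℕ, weave ss (us.map (fun u => wpow u ℓ)) ∈ G.language) ∧
  (ss.map List.length).sum ≤ 2 ^ Fintype.card G.NT ∧
  us.length ≤ 2 ^ (Fintype.card G.NT + 1) - 2

/-- The reachability set `R(u, S')`: states reachable (by any word) from the set of states
reachable from `S'` upon reading `u`. -/
def reachSet {α σ : Type*} (M : NFA α σ) (u : List α) (S' : Set σ) : Set σ :=
  { q | ∃ v : List α, q ∈ M.evalFrom (M.evalFrom S' u) v }

/-- Prefix closure of a language. -/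
def prefLang {α : Type*} (L : Language α) : Language α := { u | ∃ v, u ++ v ∈ L }


def edSpec {α : Type*} [DecidableEq α] : List α → List α → ℕ
  | [], ys => ys.length
  | x :: xs, [] => 1 + edSpec xs []
  | x :: xs, y :: ys =>
    min (1 + edSpec xs (y :: ys))
      (min (1 + edSpec (x :: xs) ys) ((if x = y then 0 else 1) + edSpec xs ys))
termination_by xs ys => xs.length + ys.length

theorem impl_spec {α : Type*} [DecidableEq α] (xs : List α) (y : α) (ys : List α)
    (d : {r : List ℕ // 0 < r.length}) (hd : d.1 = xs.tails.map (fun t => edSpec t ys)) :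
    (Levenshtein.impl Levenshtein.defaultCost xs y d).1 =
      xs.tails.map (fun t => edSpec t (y :: ys)) := by
  induction xs generalizing d with
  | nil =>
    obtain ⟨ds, w⟩ := d
    simp only at hd
    subst hd
    simp [Levenshtein.impl, edSpec, Levenshtein.defaultCost, Nat.add_comm]
  | cons x xs ih =>
    obtain ⟨ds, w⟩ := d
    simp only [List.tails, List.map_cons] at hd
    subst hd
    have hpos : 0 < (xs.tails.map (fun t => edSpec t ys)).length := by cases xs <;> simp
    have h := ih ⟨_, hpos⟩ rfl
    obtain ⟨tl, htl⟩ : ∃ tl, xs.tails.map (fun t => edSpec t ys) = edSpec xs ys :: tl := by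
      cases xs <;> simp
    have e : Levenshtein.impl Levenshtein.defaultCost (x :: xs) y
        ⟨edSpec (x :: xs) ys :: xs.tails.map (fun t => edSpec t ys), w⟩ =
        (fun r : {r : List ℕ // 0 < r.length} =>
          (⟨min (1 + r.1[0]'r.2) (min (1 + edSpec (x :: xs) ys)
            ((if x = y then 0 else 1) + edSpec xs ys)) :: r.1, by simp⟩ :
              {r : List ℕ // 0 < r.length}))
          (Levenshtein.impl Levenshtein.defaultCost xs y
            ⟨xs.tails.map (fun t => edSpec t ys), hpos⟩) := by
      simp only [htl]
      simp [Levenshtein.impl, Levenshtein.defaultCost]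
    rw [e]
    simp only [h, List.tails, List.map_cons]
    congr 1
    conv_rhs => rw [edSpec]
    cases xs <;> simp

theorem suffix_spec {α : Type*} [DecidableEq α] (xs ys : List α) :
    (suffixLevenshtein Levenshtein.defaultCost xs ys).1 =
      xs.tails.map (fun t => edSpec t ys) := by
  induction ys with
  | nil =>
    simp only [suffixLevenshtein, List.foldr_nil]
    induction xs with
    | nil => simp [edSpec]
    | cons x xs ih =>
      simp only [List.foldr_cons, List.tails, List.map_cons, ih]
      congr 1
      conv_rhs => rw [edSpec]
      cases xs <;> simp [Levenshtein.defaultCost]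
  | cons y ys ih =>
    exact impl_spec xs y ys _ ih

theorem ed_eq_spec {α : Type*} [DecidableEq α] (xs ys : List α) : ed xs ys = edSpec xs ys := by
  have h := suffix_spec xs ys
  simp only [ed, levenshtein, h]
  cases xs <;> simp

theorem edSpec_zero {α : Type*} [DecidableEq α] (xs ys : List α) (h : edSpec xs ys = 0) :
    xs = ys := by
  induction xs generalizing ys with
  | nil => simpa [edSpec, eq_comm] using h
  | cons x xs ih =>
    cases ys with
    | nil => simp [edSpec] at h
    | cons y ys =>
      rw [edSpec] at h
      have h3 : (if x = y then 0 else 1) + edSpec xs ys = 0 := by omega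
      split_ifs at h3 with hxy
      · rw [hxy, ih ys (by omega)]
      · omega

theorem edSpec_ins {α : Type*} [DecidableEq α] (xs : List α) (y : α) (ys : List α) :
    edSpec xs (y :: ys) ≤ 1 + edSpec xs ys := by
  cases xs with
  | nil => simp [edSpec, Nat.add_comm]
  | cons x xs => rw [edSpec]; omega

theorem edSpec_del {α : Type*} [DecidableEq α] (x : α) (xs ys : List α) :
    edSpec (x :: xs) ys ≤ 1 + edSpec xs ys := by
  cases ys with
  | nil => simp [edSpec]
  | cons y ys => rw [edSpec]; omega

theorem edSpec_sub {α : Type*} [DecidableEq α] (x : α) (xs : List α) (y : α) (ys : List α) :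
    edSpec (x :: xs) (y :: ys) ≤ (if x = y then 0 else 1) + edSpec xs ys := by
  rw [edSpec]; omega

theorem edSpec_split {α : Type*} [DecidableEq α] (a b w : List α) :
    ∃ w1 w2, w = w1 ++ w2 ∧ edSpec a w1 + edSpec b w2 ≤ edSpec (a ++ b) w := by
  induction a generalizing w with
  | nil => exact ⟨[], w, rfl, by simp [edSpec]⟩
  | cons x a iha =>
    induction w with
    | nil =>
      obtain ⟨w1, w2, h, hle⟩ := iha []
      refine ⟨w1, w2, h, ?_⟩
      have := edSpec_del x a w1
      simp only [List.cons_append]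
      rw [edSpec]
      omega
    | cons y w ihw =>
      have key : edSpec (x :: a ++ b) (y :: w) = 1 + edSpec (a ++ b) (y :: w) ∨
          edSpec (x :: a ++ b) (y :: w) = 1 + edSpec (x :: a ++ b) w ∨
          edSpec (x :: a ++ b) (y :: w) = (if x = y then 0 else 1) + edSpec (a ++ b) w := by
        simp only [List.cons_append]
        rw [edSpec]
        omega
      rcases key with key | key | key
      · obtain ⟨w1, w2, h, hle⟩ := iha (y :: w)
        refine ⟨w1, w2, h, ?_⟩
        have := edSpec_del x a w1
        omega
      · obtain ⟨w1, w2, h, hle⟩ := ihw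
        refine ⟨y :: w1, w2, by simp [h], ?_⟩
        have := edSpec_ins (x :: a) y w1
        omega
      · obtain ⟨w1, w2, h, hle⟩ := iha w
        refine ⟨y :: w1, w2, by simp [h], ?_⟩
        have := edSpec_sub x a y w1
        omega

theorem block_infix {α : Type*} [DecidableEq α] (u : List α) (n : ℕ) (w : List α)
    (h : edSpec (wpow u n) w < n) : ∃ p q, w = p ++ u ++ q := by
  induction n generalizing w with
  | zero => omega
  | succ n ih =>
    have e : wpow u (n + 1) = u ++ wpow u n := by simp [wpow, List.replicate_succ]
    rw [e] at h
    obtain ⟨w1, w2, rfl, hle⟩ := edSpec_split u (wpow u n) w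
    by_cases h0 : edSpec u w1 = 0
    · obtain rfl := edSpec_zero _ _ h0
      exact ⟨[], w2, by simp⟩
    · obtain ⟨p, q, rfl⟩ := ih w2 (by omega)
      exact ⟨w1 ++ p, q, by simp⟩

theorem evalFrom_mono_aux {α σ : Type*} (M : NFA α σ) {S T : Set σ} (h : S ⊆ T) (x : List α) :
    M.evalFrom S x ⊆ M.evalFrom T x := by
  intro q hq
  rw [NFA.mem_evalFrom_iff_exists] at hq ⊢
  obtain ⟨t, ht, hq⟩ := hq
  exact ⟨t, h ht, hq⟩

theorem main_aux {α σ : Type*} [DecidableEq α] (M : NFA α σ) (l : ℕ)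
    (us : List (List α)) : ∀ (ss : List (List α)) (_ : ss.length = us.length + 1)
    (S : Set σ) (_ : ∀ v, M.evalFrom S v ⊆ S) (w : List α) (_ : (M.evalFrom S w).Nonempty)
    (_ : edSpec (weave ss (us.map (fun u => wpow u l))) w < l),
    (us.foldl (fun S u => reachSet M u S) S).Nonempty := by
  induction us with
  | nil =>
    intro ss _ S hS w hw _
    exact hw.mono (hS w)
  | cons u us ih =>
    intro ss hss S hS w hw hlt
    cases ss with
    | nil => simp at hss
    | cons s ss =>
      have e : weave (s :: ss) ((u :: us).map (fun u => wpow u l)) =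
          s ++ (wpow u l ++ weave ss (us.map (fun u => wpow u l))) := by
        simp [weave]
      rw [e] at hlt
      obtain ⟨w1, w2, rfl, h1⟩ := edSpec_split s
        (wpow u l ++ weave ss (us.map (fun u => wpow u l))) w
      obtain ⟨w3, w4, rfl, h2⟩ := edSpec_split (wpow u l)
        (weave ss (us.map (fun u => wpow u l))) w2
      obtain ⟨p, q, rfl⟩ := block_infix u l w3 (by omega)
      simp only [List.foldl_cons]
      refine ih ss (by simpa using hss) _ ?_ w4 ?_ (by omega)
      · intro v x hx
        rw [NFA.mem_evalFrom_iff_exists] at hx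
        obtain ⟨t, ⟨v', ht⟩, hx⟩ := hx
        refine ⟨v' ++ v, ?_⟩
        rw [NFA.evalFrom_append]
        exact NFA.mem_evalFrom_iff_exists.2 ⟨t, ht, hx⟩
      · refine hw.mono ?_
        simp only [NFA.evalFrom_append]
        apply evalFrom_mono_aux
        intro x hx
        refine ⟨q, ?_⟩
        refine evalFrom_mono_aux M (evalFrom_mono_aux M ?_ u) q hx
        rw [← NFA.evalFrom_append]
        exact hS _

/-- If the nested reachability set of `u₁, …, u_k` (`k ≥ 1`) is empty in a
safety NFA, then every accepted word has edit distance at least `ℓ` from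
`s₁u₁^ℓ⋯s_k u_k^ℓ s_{k+1}`. -/
theorem le_ed_of_nested_reach_empty {α σ : Type*} [DecidableEq α] [Fintype σ]
    (M : NFA α σ) (hsafety : M.accept = Set.univ)
    (us : List (List α)) (hk : 1 ≤ us.length)
    (hempty : us.foldl (fun S u => reachSet M u S) Set.univ = ∅)
    (ℓ : ℕ) (ss : List (List α)) (hss : ss.length = us.length + 1) :
    ∀ w' ∈ M.accepts, ℓ ≤ ed (weave ss (us.map (fun u => wpow u ℓ))) w' := by
  intro w' hw'
  by_contra hlt
  rw [ed_eq_spec] at hlt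
  obtain ⟨q, _, hq⟩ := hw'
  have := main_aux M ℓ us ss hss Set.univ (fun _ => Set.subset_univ _) w'
    ⟨q, evalFrom_mono_aux M (Set.subset_univ _) w' hq⟩ (by omega)
  rw [hempty] at this
  exact Set.not_nonempty_empty this
end

section
/- Let M be an NFA over an alphabet Σ with n states. For every word w in Pref(M.accepts) (i.e., w is a prefix of some accepted word), there exists a word w' with |w'| ≤ n such that the concatenation w·w' is accepted by M. -/
theorem aux_cons {α σ : Type*} (M : NFA α σ) (s : σ) (a : α) (v : List α) :
    a :: v ∈ M.acceptsFrom {s} ↔ ∃ t ∈ M.step s a, v ∈ M.acceptsFrom {t} := by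
  rw [NFA.cons_mem_acceptsFrom, NFA.stepSet_singleton, NFA.mem_acceptsFrom]
  constructor
  · rintro ⟨f, hf, h⟩
    obtain ⟨t, ht, h⟩ := NFA.mem_evalFrom_iff_exists.1 h
    exact ⟨t, ht, f, hf, h⟩
  · rintro ⟨t, ht, f, hf, h⟩
    exact ⟨f, hf, NFA.mem_evalFrom_iff_exists.2 ⟨t, ht, h⟩⟩

theorem aux_levels {α σ : Type*} (M : NFA α σ) (v : List α) : ∀ s : σ,
    v ∈ M.acceptsFrom {s} → (∀ v' ∈ M.acceptsFrom {s}, v.length ≤ v'.length) →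
    ∀ k ≤ v.length, ∃ q : σ, ∃ u ∈ M.acceptsFrom {q}, u.length = k ∧
      ∀ v' ∈ M.acceptsFrom {q}, k ≤ v'.length := by
  induction v with
  | nil =>
    intro s h hm k hk
    have hk0 : k = 0 := by simpa using hk
    subst hk0
    exact ⟨s, [], h, rfl, fun _ _ => Nat.zero_le _⟩
  | cons a v ih =>
    intro s h hm k hk
    rcases Nat.lt_or_ge v.length k with h1 | h1
    · have hk' : (a :: v).length = k := by
        simp only [List.length_cons] at hk ⊢; omega
      exact ⟨s, a :: v, h, hk', hk' ▸ hm⟩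
    · obtain ⟨t, ht, hv⟩ := (aux_cons M s a v).1 h
      refine ih t hv (fun v' hv' => ?_) k h1
      have := hm (a :: v') ((aux_cons M s a v').2 ⟨t, ht, hv'⟩)
      simpa using this

/-- Every prefix of an accepted word of an `n`-state NFA can be extended to an
accepted word by appending at most `n` letters. -/
theorem exists_short_extension_of_mem_prefLang {α σ : Type*} [Fintype σ] (M : NFA α σ)
    (w : List α) (hw : w ∈ prefLang M.accepts) :
    ∃ w' : List α, w'.length ≤ Fintype.card σ ∧ w ++ w' ∈ M.accepts := by
  obtain ⟨v, f, hf, hv⟩ := hw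
  change f ∈ M.evalFrom M.start (w ++ v) at hv
  rw [NFA.evalFrom_append] at hv
  obtain ⟨s, hs, hv⟩ := NFA.mem_evalFrom_iff_exists.1 hv
  have hex : ∃ k, ∃ u ∈ M.acceptsFrom {s}, u.length = k := ⟨_, v, ⟨f, hf, hv⟩, rfl⟩
  classical
  obtain ⟨u, hu, hul⟩ := Nat.find_spec hex
  have hmin : ∀ v' ∈ M.acceptsFrom {s}, u.length ≤ v'.length := fun v' hv' =>
    hul ▸ Nat.find_min' hex ⟨v', hv', rfl⟩
  have hl := aux_levels M u s hu hmin
  choose q x hx hxl hxm using hl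
  have hinj : Function.Injective
      (fun i : Fin u.length => q i.1 (Nat.le_of_lt i.2)) := by
    intro i j hij
    have hij : q i.1 (Nat.le_of_lt i.2) = q j.1 (Nat.le_of_lt j.2) := hij
    have h1 := hxm i.1 (Nat.le_of_lt i.2) (x j.1 (Nat.le_of_lt j.2))
      (by rw [hij]; exact hx _ _)
    have h2 := hxm j.1 (Nat.le_of_lt j.2) (x i.1 (Nat.le_of_lt i.2))
      (by rw [← hij]; exact hx _ _)
    rw [hxl] at h1 h2
    exact Fin.ext (le_antisymm h1 h2)
  have hc := Fintype.card_le_of_injective _ hinj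
  rw [Fintype.card_fin] at hc
  obtain ⟨g, hg, hgu⟩ := hu
  refine ⟨u, hc, g, hg, ?_⟩
  change g ∈ M.evalFrom M.start (w ++ u)
  rw [NFA.evalFrom_append]
  exact NFA.mem_evalFrom_iff_exists.2 ⟨s, hs, hgu⟩
end
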